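/- arXiv:2008.01804 — 4 statements merged into one kernel-verified Lean document; each statement's English description precedes it below -/
import Mathlib

section
/- Let γ > 0 and let c : ℝ² → ℝ be continuous with c(x) ≥ γ for all x. Let ε₁, ε₂ > 0, let u : ℝ² → ℝ be four times continuously differentiable with compact support, and define f := ε₁²Δ²u − ε₂²Δu + c·u, where Δ is the Laplacian and Δ² the biharmonic operator. Then ‖u‖²_{L²(ℝ²)} + ε₂² ‖∇u‖²_{L²(ℝ²)} + ε₁² ‖Δu‖²_{L²(ℝ²)} ≤ (min(γ,1))⁻² ‖f‖²_{L²(ℝ²)}. -/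
open MeasureTheory Real

/-- The Laplacian of a function on `ℝ²`, as the sum of the second partial derivatives. -/
noncomputable def lap (u : EuclideanSpace ℝ (Fin 2) → ℝ) (x : EuclideanSpace ℝ (Fin 2)) : ℝ :=
  ∑ i : Fin 2,
    fderiv ℝ (fun y => fderiv ℝ u y (EuclideanSpace.single i 1)) x (EuclideanSpace.single i 1)

/-- Directional derivative along the `i`-th basis vector. -/
noncomputable def pd (i : Fin 2) (u : EuclideanSpace ℝ (Fin 2) → ℝ)
    (x : EuclideanSpace ℝ (Fin 2)) : ℝ :=
  fderiv ℝ u x (EuclideanSpace.single i 1)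

lemma lap_eq_pd (u : EuclideanSpace ℝ (Fin 2) → ℝ) (x) :
    lap u x = pd 0 (pd 0 u) x + pd 1 (pd 1 u) x := by
  simp only [lap, Fin.sum_univ_two]
  rfl

lemma pd_contDiff {m n : WithTop ℕ∞} (i : Fin 2) {u : EuclideanSpace ℝ (Fin 2) → ℝ}
    (hu : ContDiff ℝ n u) (h : m + 1 ≤ n) : ContDiff ℝ m (pd i u) :=
  (hu.fderiv_right h).clm_apply contDiff_const

lemma pd_supp (i : Fin 2) {u : EuclideanSpace ℝ (Fin 2) → ℝ}
    (hu : HasCompactSupport u) : HasCompactSupport (pd i u) :=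
  hu.fderiv_apply (𝕜 := ℝ) _

lemma lap_contDiff {u : EuclideanSpace ℝ (Fin 2) → ℝ} {m k n : WithTop ℕ∞}
    (hu : ContDiff ℝ n u) (h : k + 1 ≤ n) (h' : m + 1 ≤ k) : ContDiff ℝ m (lap u) := by
  have : lap u = fun x => pd 0 (pd 0 u) x + pd 1 (pd 1 u) x := funext (lap_eq_pd u)
  rw [this]
  exact (pd_contDiff 0 (pd_contDiff 0 hu h) h').add (pd_contDiff 1 (pd_contDiff 1 hu h) h')

lemma lap_supp {u : EuclideanSpace ℝ (Fin 2) → ℝ}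
    (hu : HasCompactSupport u) : HasCompactSupport (lap u) := by
  have : lap u = pd 0 (pd 0 u) + pd 1 (pd 1 u) := funext (lap_eq_pd u)
  rw [this]
  exact (pd_supp 0 (pd_supp 0 hu)).add (pd_supp 1 (pd_supp 1 hu))

lemma int_mul {u v : EuclideanSpace ℝ (Fin 2) → ℝ} (hu : Continuous u) (hv : Continuous v)
    (hs : HasCompactSupport u) : Integrable (fun x => u x * v x) :=
  (hu.mul hv).integrable_of_hasCompactSupport hs.mul_right

lemma pd_ibp (i : Fin 2) {u v : EuclideanSpace ℝ (Fin 2) → ℝ} (hu : ContDiff ℝ 1 u)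
    (hv : ContDiff ℝ 1 v) (hs : HasCompactSupport u) :
    ∫ x, u x * pd i v x = - ∫ x, pd i u x * v x := by
  have cu : Continuous (pd i u) := (pd_contDiff (m := 0) i hu (by norm_num)).continuous
  have cv : Continuous (pd i v) := (pd_contDiff (m := 0) i hv (by norm_num)).continuous
  exact integral_mul_fderiv_eq_neg_fderiv_mul_of_integrable
    (int_mul cu hv.continuous (pd_supp i hs)) (int_mul hu.continuous cv hs)
    (int_mul hu.continuous hv.continuous hs)
    (fun x _ => hu.differentiable (by norm_num) x) (fun x _ => hv.differentiable (by norm_num) x)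

lemma green {u v : EuclideanSpace ℝ (Fin 2) → ℝ} (hu : ContDiff ℝ 2 u)
    (hv : ContDiff ℝ 2 v) (hs : HasCompactSupport u) :
    ∫ x, u x * lap v x = - ∫ x, (pd 0 u x * pd 0 v x + pd 1 u x * pd 1 v x) := by
  have du (i) : ContDiff ℝ 1 (pd i u) := pd_contDiff i hu (by norm_num)
  have dv (i) : ContDiff ℝ 1 (pd i v) := pd_contDiff i hv (by norm_num)
  have ddv (i) : Continuous (pd i (pd i v)) :=
    (pd_contDiff (m := 0) i (dv i) (by norm_num)).continuous
  have hu1 : ContDiff ℝ 1 u := hu.of_le (by norm_num)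
  simp only [lap_eq_pd, mul_add]
  rw [integral_add (int_mul hu.continuous (ddv 0) hs) (int_mul hu.continuous (ddv 1) hs),
    integral_add (int_mul (du 0).continuous (dv 0).continuous (pd_supp 0 hs))
      (int_mul (du 1).continuous (dv 1).continuous (pd_supp 1 hs)),
    pd_ibp 0 hu1 (dv 0) hs, pd_ibp 1 hu1 (dv 1) hs]
  ring

lemma norm_gradient_sq (u : EuclideanSpace ℝ (Fin 2) → ℝ) (x) :
    ‖gradient u x‖ ^ 2 = pd 0 u x * pd 0 u x + pd 1 u x * pd 1 u x := by
  have h (i : Fin 2) : gradient u x i = pd i u x := by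
    have : inner ℝ (gradient u x) (EuclideanSpace.single i (1:ℝ)) = pd i u x := by
      simp only [gradient, InnerProductSpace.toDual_symm_apply, pd]
    rw [← this, EuclideanSpace.inner_single_right]
    simp
  rw [EuclideanSpace.norm_sq_eq, Fin.sum_univ_two, h, h]
  simp only [Real.norm_eq_abs, sq_abs]
  ring

/-- A priori energy-norm stability estimate for classical, compactly supported solutions of
`ε₁²Δ²u − ε₂²Δu + cu = f`:
`‖u‖² + ε₂²‖∇u‖² + ε₁²‖Δu‖² ≤ (min γ 1)⁻² ‖f‖²`. -/
theorem energy_norm_stability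
    (γ : ℝ) (hγ : 0 < γ)
    (c : EuclideanSpace ℝ (Fin 2) → ℝ) (hc_cont : Continuous c)
    (hc_ge : ∀ x, γ ≤ c x)
    (ε₁ ε₂ : ℝ) (hε₁ : 0 < ε₁) (hε₂ : 0 < ε₂)
    (u : EuclideanSpace ℝ (Fin 2) → ℝ)
    (hu_smooth : ContDiff ℝ 4 u) (hu_supp : HasCompactSupport u)
    (f : EuclideanSpace ℝ (Fin 2) → ℝ)
    (hf : ∀ x, f x = ε₁ ^ 2 * lap (lap u) x - ε₂ ^ 2 * lap u x + c x * u x) :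
    (∫ x, u x ^ 2) + ε₂ ^ 2 * (∫ x, ‖gradient u x‖ ^ 2) + ε₁ ^ 2 * (∫ x, lap u x ^ 2)
      ≤ ((min γ 1)⁻¹) ^ 2 * ∫ x, f x ^ 2 := by
  have hL : ContDiff ℝ 2 (lap u) := lap_contDiff (k := 3) hu_smooth (by norm_num) (by norm_num)
  have hLL : Continuous (lap (lap u)) :=
    (lap_contDiff (k := 1) (m := 0) hL (by norm_num) (by norm_num)).continuous
  have hu2 : ContDiff ℝ 2 u := hu_smooth.of_le (by norm_num)
  have hLs := lap_supp hu_supp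
  have cu := hu2.continuous
  have g1 : ∫ x, u x * lap u x = - ∫ x, ‖gradient u x‖ ^ 2 := by
    rw [green hu2 hu2 hu_supp]
    simp only [norm_gradient_sq]
  have g2 : ∫ x, u x * lap (lap u) x = ∫ x, lap u x ^ 2 := by
    rw [green hu2 hL hu_supp]
    have := green hL hu2 hLs
    simp only [sq]
    rw [this]
    simp only [mul_comm]
  have hfe : f = fun x => ε₁ ^ 2 * lap (lap u) x - ε₂ ^ 2 * lap u x + c x * u x := funext hf
  have cf : Continuous f := by
    rw [hfe]
    have := hL.continuous
    fun_prop
  have sf : HasCompactSupport f := by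
    rw [hfe]
    exact (((lap_supp hLs).mul_left (f := fun _ => ε₁ ^ 2)).sub
      (hLs.mul_left (f := fun _ => ε₂ ^ 2))).add (hu_supp.mul_left (f := c))
  have iu : Integrable (fun x => u x ^ 2) := by
    simpa only [sq] using int_mul cu cu hu_supp
  have i_f : Integrable (fun x => f x ^ 2) := by
    simpa only [sq] using int_mul cf cf sf
  have iuf := int_mul cu cf hu_supp
  have i1 := (int_mul cu hLL hu_supp).const_mul (ε₁ ^ 2)
  have i2 := (int_mul cu hL.continuous hu_supp).const_mul (ε₂ ^ 2)
  have i3 : Integrable (fun x => c x * u x ^ 2) := by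
    refine (int_mul cu (hc_cont.mul cu) hu_supp).congr (Filter.Eventually.of_forall fun x => ?_)
    simp only [Pi.mul_apply]
    ring
  have i12 : Integrable (fun x => ε₁ ^ 2 * (u x * lap (lap u) x) - ε₂ ^ 2 * (u x * lap u x)) :=
    i1.sub i2
  have e1 : ∫ x, u x * f x = ε₁ ^ 2 * (∫ x, lap u x ^ 2) + ε₂ ^ 2 * (∫ x, ‖gradient u x‖ ^ 2)
      + ∫ x, c x * u x ^ 2 := by
    have : (fun x => u x * f x) = fun x => (ε₁ ^ 2 * (u x * lap (lap u) x)
        - ε₂ ^ 2 * (u x * lap u x)) + c x * u x ^ 2 := by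
      funext x
      rw [hf]
      ring
    rw [this, integral_add i12 i3, integral_sub i1 i2, integral_const_mul, integral_const_mul,
      g1, g2]
    ring
  have hm : 0 < min γ 1 := lt_min hγ one_pos
  have hmγ : min γ 1 ≤ γ := min_le_left _ _
  have hm1 : min γ 1 ≤ 1 := min_le_right _ _
  set m := min γ 1
  have e2 : m * ∫ x, u x ^ 2 ≤ ∫ x, c x * u x ^ 2 := by
    rw [← integral_const_mul]
    exact integral_mono (iu.const_mul m) i3
      (fun x => mul_le_mul_of_nonneg_right (hmγ.trans (hc_ge x)) (sq_nonneg _))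
  have e3 : 2 * m * ∫ x, u x * f x ≤ m ^ 2 * (∫ x, u x ^ 2) + ∫ x, f x ^ 2 := by
    rw [← integral_const_mul, ← integral_const_mul, ← integral_add (iu.const_mul _) i_f]
    refine integral_mono (iuf.const_mul _) ((iu.const_mul _).add i_f) (fun x => ?_)
    simp only []
    nlinarith [sq_nonneg (m * u x - f x)]
  have nA : 0 ≤ ε₁ ^ 2 * (∫ x, lap u x ^ 2) :=
    mul_nonneg (sq_nonneg _) (integral_nonneg fun x => sq_nonneg _)
  have nB : 0 ≤ ε₂ ^ 2 * (∫ x, ‖gradient u x‖ ^ 2) :=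
    mul_nonneg (sq_nonneg _) (integral_nonneg fun x => sq_nonneg _)
  rw [e1] at e3
  rw [inv_pow, inv_mul_eq_div, le_div_iff₀ (by positivity)]
  generalize ε₁ ^ 2 * (∫ x, lap u x ^ 2) = A at *
  generalize ε₂ ^ 2 * (∫ x, ‖gradient u x‖ ^ 2) = B at *
  generalize (∫ x, u x ^ 2) = U at *
  generalize (∫ x, c x * u x ^ 2) = C at *
  have h1 : m * (m * U) ≤ m * C := mul_le_mul_of_nonneg_left e2 hm.le
  have h2 : m * (m * (A + B)) ≤ m * (A + B) :=
    mul_le_mul_of_nonneg_left (mul_le_of_le_one_left (by positivity) hm1) hm.le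
  have h3 : 0 ≤ m * (A + B) := by positivity
  nlinarith
end

section
/- Let Ω ⊂ ℝ² be a bounded open set and M > 0 a constant such that for every t > 0 the Lebesgue measure of {x ∈ Ω : dist(x, ∂Ω) ≤ t} is at most M·t. Let 0 < ε₁ and 0 < ε₂ ≤ 1, let C > 0, and let E : Ω → ℝ be twice continuously differentiable with, for all x ∈ Ω and d(x) := dist(x, ∂Ω): |E(x)| ≤ C e^{−d(x)/ε₂}, |∇E(x)| ≤ C ε₂⁻¹ e^{−d(x)/ε₂}, and |ΔE(x)| ≤ C ε₂⁻² e^{−d(x)/ε₂}. Then the squared energy norm of (E, ε₁ΔE) satisfies ‖E‖²_{L²(Ω)} + ε₂² ‖∇E‖²_{L²(Ω)} + ε₁² ‖ΔE‖²_{L²(Ω)} ≤ C² M ( ε₂ + ε₁²/ε₂³ ). -/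
open MeasureTheory Real Metric

theorem layer_aux
    (Ω : Set (EuclideanSpace ℝ (Fin 2))) (hΩ_open : IsOpen Ω)
    (M : ℝ) (hM : 0 < M)
    (hstrip : ∀ t : ℝ, 0 < t →
      volume {x ∈ Ω | infDist x (frontier Ω) ≤ t} ≤ ENNReal.ofReal (M * t))
    (ε₂ : ℝ) (hε₂ : 0 < ε₂) :
    IntegrableOn (fun x => Real.exp (-(infDist x (frontier Ω)) / ε₂) ^ 2) Ω ∧
    ∫ x in Ω, Real.exp (-(infDist x (frontier Ω)) / ε₂) ^ 2 ≤ M * ε₂ / 2 := by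
  set f : EuclideanSpace ℝ (Fin 2) → ℝ :=
    fun x => Real.exp (-(infDist x (frontier Ω)) / ε₂) ^ 2 with hf
  have hfc : Continuous f := by
    have := continuous_infDist_pt (frontier Ω)
    fun_prop
  have hfnn : ∀ x, 0 ≤ f x := fun x => by positivity
  have hlog : IntegrableOn (fun t : ℝ => M * ε₂ / 2 * (-Real.log t)) (Set.Ioc 0 1) := by
    have h := (intervalIntegral.intervalIntegrable_log' (a := 0) (b := 1))
    rw [intervalIntegrable_iff_integrableOn_Ioc_of_le zero_le_one] at h
    exact (h.neg).const_mul _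
  have hval : ∫ t in Set.Ioc (0:ℝ) 1, M * ε₂ / 2 * (-Real.log t) = M * ε₂ / 2 := by
    rw [← intervalIntegral.integral_of_le zero_le_one, intervalIntegral.integral_const_mul,
      intervalIntegral.integral_neg, integral_log]
    simp
  have key : ∫⁻ x in Ω, ENNReal.ofReal (f x) ≤ ENNReal.ofReal (M * ε₂ / 2) := by
    rw [lintegral_eq_lintegral_meas_lt _ (Filter.Eventually.of_forall hfnn)
      hfc.measurable.aemeasurable, ← hval, ofReal_integral_eq_lintegral_ofReal hlog]
    · rw [← lintegral_indicator measurableSet_Ioi, ← lintegral_indicator measurableSet_Ioc]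
      apply lintegral_mono
      intro t
      by_cases ht : 0 < t
      · by_cases ht1 : t < 1
        · have hl : 0 < -Real.log t := by
            have := Real.log_neg ht ht1
            linarith
          rw [Set.indicator_of_mem (Set.mem_Ioi.2 ht), Set.indicator_of_mem (Set.mem_Ioc.2 ⟨ht, ht1.le⟩),
            Measure.restrict_apply' hΩ_open.measurableSet]
          have h := hstrip (ε₂ / 2 * (-Real.log t)) (by positivity)
          have e : M * (ε₂ / 2 * (-Real.log t)) = M * ε₂ / 2 * (-Real.log t) := by ring
          rw [e] at h
          refine le_trans (measure_mono ?_) h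
          rintro x ⟨hx, hxΩ⟩
          refine ⟨hxΩ, ?_⟩
          have hx' : t < f x := hx
          have h2 := Real.log_lt_log ht hx'
          simp only [hf, Real.log_pow, Real.log_exp] at h2
          push_cast at h2
          have h3 : ε₂ * Real.log t < ε₂ * (2 * (-(infDist x (frontier Ω)) / ε₂)) :=
            mul_lt_mul_of_pos_left h2 hε₂
          have h4 : ε₂ * (2 * (-(infDist x (frontier Ω)) / ε₂)) =
            -2 * infDist x (frontier Ω) := by field_simp
          linarith
        · rw [Set.indicator_of_mem (Set.mem_Ioi.2 ht)]
          have : {a | t < f a} = ∅ := by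
            ext x
            simp only [Set.mem_setOf_eq, Set.mem_empty_iff_false, iff_false, not_lt]
            refine le_trans ?_ (not_lt.1 ht1)
            apply pow_le_one₀ (Real.exp_nonneg _)
            rw [Real.exp_le_one_iff]
            exact div_nonpos_of_nonpos_of_nonneg (neg_nonpos.2 infDist_nonneg) hε₂.le
          rw [this]
          simp
      · rw [Set.indicator_of_notMem (by simpa using ht)]
        exact zero_le
    · filter_upwards [ae_restrict_mem measurableSet_Ioc] with t ht
      have := Real.log_nonpos ht.1.le ht.2
      have : 0 ≤ -Real.log t := by linarith
      show 0 ≤ M * ε₂ / 2 * (-Real.log t)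
      positivity
  constructor
  · refine ⟨hfc.aestronglyMeasurable, ?_⟩
    rw [hasFiniteIntegral_iff_ofReal (Filter.Eventually.of_forall hfnn)]
    exact key.trans_lt ENNReal.ofReal_lt_top
  · rw [integral_eq_lintegral_of_nonneg_ae (Filter.Eventually.of_forall hfnn)
      hfc.aestronglyMeasurable]
    exact ENNReal.toReal_le_of_le_ofReal (by positivity) key

/-- Energy norm of the slow boundary layer component `E₂ ~ e^{−dist(x,∂Ω)/ε₂}`:
`|||(E, ε₁ΔE)|||² ≤ C² M (ε₂ + ε₁²/ε₂³)`. -/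
theorem energy_norm_slow_layer
    (Ω : Set (EuclideanSpace ℝ (Fin 2)))
    (hΩ_open : IsOpen Ω) (hΩ_bdd : Bornology.IsBounded Ω)
    (M : ℝ) (hM : 0 < M)
    (hstrip : ∀ t : ℝ, 0 < t →
      volume {x ∈ Ω | infDist x (frontier Ω) ≤ t} ≤ ENNReal.ofReal (M * t))
    (ε₁ ε₂ : ℝ) (hε₁ : 0 < ε₁) (hε₂ : 0 < ε₂) (hε₂1 : ε₂ ≤ 1)
    (C : ℝ) (hC : 0 < C)
    (E : EuclideanSpace ℝ (Fin 2) → ℝ) (hE_smooth : ContDiff ℝ 2 E)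
    (hE0 : ∀ x ∈ Ω, |E x| ≤ C * Real.exp (-(infDist x (frontier Ω)) / ε₂))
    (hE1 : ∀ x ∈ Ω, ‖gradient E x‖ ≤ C * ε₂⁻¹ * Real.exp (-(infDist x (frontier Ω)) / ε₂))
    (hE2 : ∀ x ∈ Ω, |lap E x| ≤ C * ε₂⁻¹ ^ 2 * Real.exp (-(infDist x (frontier Ω)) / ε₂)) :
    (∫ x in Ω, E x ^ 2) + ε₂ ^ 2 * (∫ x in Ω, ‖gradient E x‖ ^ 2)
      + ε₁ ^ 2 * (∫ x in Ω, lap E x ^ 2)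
      ≤ C ^ 2 * M * (ε₂ + ε₁ ^ 2 / ε₂ ^ 3) := by
  obtain ⟨hint, hI⟩ := layer_aux Ω hΩ_open M hM hstrip ε₂ hε₂
  have gen : ∀ (g : EuclideanSpace ℝ (Fin 2) → ℝ) (K : ℝ),
      (∀ x ∈ Ω, |g x| ≤ K * Real.exp (-(infDist x (frontier Ω)) / ε₂)) →
      ∫ x in Ω, g x ^ 2 ≤ K ^ 2 * (M * ε₂ / 2) := by
    intro g K hg
    refine le_trans (integral_mono_of_nonneg (Filter.Eventually.of_forall fun x => sq_nonneg (g x))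
      (hint.const_mul (K ^ 2)) ?_) ?_
    · filter_upwards [ae_restrict_mem hΩ_open.measurableSet] with x hx
      rw [← mul_pow, ← sq_abs]
      exact pow_le_pow_left₀ (abs_nonneg _) (hg x hx) 2
    · rw [integral_const_mul]
      exact mul_le_mul_of_nonneg_left hI (sq_nonneg K)
  have h0 := gen E C hE0
  have h1 := gen (fun x => ‖gradient E x‖) (C * ε₂⁻¹) (fun x hx => by
    rw [abs_of_nonneg (norm_nonneg _)]
    exact hE1 x hx)
  have h2 := gen (lap E) (C * ε₂⁻¹ ^ 2) hE2
  have h1' := mul_le_mul_of_nonneg_left h1 (sq_nonneg ε₂)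
  have h2' := mul_le_mul_of_nonneg_left h2 (sq_nonneg ε₁)
  have e1 : ε₂ ^ 2 * ((C * ε₂⁻¹) ^ 2 * (M * ε₂ / 2)) = C ^ 2 * (M * ε₂ / 2) := by
    field_simp
  have e2 : ε₁ ^ 2 * ((C * ε₂⁻¹ ^ 2) ^ 2 * (M * ε₂ / 2)) =
      C ^ 2 * M * (ε₁ ^ 2 / ε₂ ^ 3) / 2 := by
    field_simp
  have e3 : 0 ≤ C ^ 2 * M * (ε₁ ^ 2 / ε₂ ^ 3) := by positivity
  rw [e1] at h1'
  rw [e2] at h2'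
  linarith
end

section
/- Let Ω ⊂ ℝ² be a bounded open set and M > 0 a constant such that for every t > 0 the Lebesgue measure of {x ∈ Ω : dist(x, ∂Ω) ≤ t} is at most M·t. Let 0 < ε₁ ≤ ε₂² ≤ 1, let C > 0, and let E : Ω → ℝ be twice continuously differentiable with, for all x ∈ Ω and d(x) := dist(x, ∂Ω): |E(x)| ≤ C e^{−d(x)/ε₂}, |∇E(x)| ≤ C ε₂⁻¹ e^{−d(x)/ε₂}, and |ΔE(x)| ≤ C ε₂⁻² e^{−d(x)/ε₂}. Then the squared balanced norm of (E, ε₁ΔE) is uniformly bounded: (ε₂/ε₁) ‖ε₁ΔE‖²_{L²(Ω)} + ε₂ ‖∇E‖²_{L²(Ω)} + ‖E‖²_{L²(Ω)} ≤ 2 C² M, uniformly in ε₁ and ε₂. -/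
open MeasureTheory Real Metric

theorem exp_layer_lintegral (Ω : Set (EuclideanSpace ℝ (Fin 2))) (hΩ : IsOpen Ω)
    (M : ℝ) (hM : 0 < M)
    (hstrip : ∀ t : ℝ, 0 < t →
      volume {x ∈ Ω | infDist x (frontier Ω) ≤ t} ≤ ENNReal.ofReal (M * t))
    (e : ℝ) (he : 0 < e) :
    ∫⁻ x in Ω, ENNReal.ofReal (Real.exp (-(infDist x (frontier Ω)) / e) ^ 2)
      ≤ ENNReal.ofReal (M * e / 2) := by
  have hcont : Continuous fun x : EuclideanSpace ℝ (Fin 2) =>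
      Real.exp (-(infDist x (frontier Ω)) / e) ^ 2 :=
    ((Real.continuous_exp.comp
      ((continuous_infDist_pt (frontier Ω)).neg.div_const e))).pow 2
  rw [lintegral_eq_lintegral_meas_lt (volume.restrict Ω)
    (Filter.Eventually.of_forall fun x => by positivity) hcont.measurable.aemeasurable]
  have hint : IntegrableOn (fun t : ℝ => (M * e / 2) * (-Real.log t)) (Set.Ioc 0 1) := by
    have h := (intervalIntegral.intervalIntegrable_log' (a := 0) (b := 1)).neg.const_mul (M * e / 2)
    exact (intervalIntegrable_iff_integrableOn_Ioc_of_le zero_le_one).1 h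
  have hval : ∫ t in Set.Ioc (0:ℝ) 1, (M * e / 2) * (-Real.log t) = M * e / 2 := by
    rw [← intervalIntegral.integral_of_le zero_le_one, intervalIntegral.integral_const_mul,
      intervalIntegral.integral_neg, integral_log]
    simp
  have hnn : 0 ≤ᵐ[volume.restrict (Set.Ioc (0:ℝ) 1)] fun t => (M * e / 2) * (-Real.log t) := by
    filter_upwards [ae_restrict_mem measurableSet_Ioc] with t ht
    have := Real.log_nonpos ht.1.le ht.2
    have h2 : 0 ≤ M * e / 2 := by positivity
    exact mul_nonneg h2 (by linarith)
  rw [← hval, ofReal_integral_eq_lintegral_ofReal hint hnn,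
    ← lintegral_indicator measurableSet_Ioi, ← lintegral_indicator measurableSet_Ioc]
  refine lintegral_mono fun t => ?_
  by_cases h0 : 0 < t
  swap
  · simp [Set.indicator, h0]
  rw [Set.indicator_of_mem (show t ∈ Set.Ioi (0:ℝ) from h0),
    Measure.restrict_apply (measurableSet_lt measurable_const hcont.measurable)]
  have hlog : ∀ x : EuclideanSpace ℝ (Fin 2),
      t < Real.exp (-(infDist x (frontier Ω)) / e) ^ 2 →
      infDist x (frontier Ω) < e / 2 * (-Real.log t) := by
    intro x hx
    rw [← Real.exp_nat_mul, ← Real.log_lt_iff_lt_exp h0] at hx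
    have : ((2:ℕ):ℝ) * (-(infDist x (frontier Ω)) / e) * e = -2 * infDist x (frontier Ω) := by
      field_simp
      norm_num
      ring
    nlinarith [mul_lt_mul_of_pos_right hx he]
  by_cases h1 : t < 1
  · rw [Set.indicator_of_mem (show t ∈ Set.Ioc (0:ℝ) 1 from ⟨h0, h1.le⟩)]
    have hl := Real.log_neg h0 h1
    refine (measure_mono ?_).trans ((hstrip (e / 2 * (-Real.log t))
      (mul_pos (by positivity) (by linarith))).trans (le_of_eq ?_))
    · rintro x ⟨hx, hxΩ⟩
      exact ⟨hxΩ, (hlog x hx).le⟩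
    · congr 1
      ring
  · have : {a : EuclideanSpace ℝ (Fin 2) |
        t < Real.exp (-(infDist a (frontier Ω)) / e) ^ 2} ∩ Ω = ∅ := by
      ext x
      simp only [Set.mem_inter_iff, Set.mem_setOf_eq, Set.mem_empty_iff_false, iff_false, not_and]
      intro hx
      exfalso
      have a1 := hlog x hx
      have a2 := Real.log_nonneg (not_lt.1 h1)
      have a3 : 0 ≤ infDist x (frontier Ω) := infDist_nonneg
      nlinarith [mul_nonneg he.le a2]
    rw [this]
    simp

/-- Balanced norm of the slow boundary layer component `E₂ ~ e^{−dist(x,∂Ω)/ε₂}`: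
`|||(E, ε₁ΔE)|||_B² ≤ 2 C² M`, uniformly in `ε₁, ε₂`. -/
theorem balanced_norm_slow_layer
    (Ω : Set (EuclideanSpace ℝ (Fin 2)))
    (hΩ_open : IsOpen Ω) (hΩ_bdd : Bornology.IsBounded Ω)
    (M : ℝ) (hM : 0 < M)
    (hstrip : ∀ t : ℝ, 0 < t →
      volume {x ∈ Ω | infDist x (frontier Ω) ≤ t} ≤ ENNReal.ofReal (M * t))
    (ε₁ ε₂ : ℝ) (hε₁ : 0 < ε₁) (hε₁₂ : ε₁ ≤ ε₂ ^ 2) (hε₂1 : ε₂ ^ 2 ≤ 1)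
    (C : ℝ) (hC : 0 < C)
    (E : EuclideanSpace ℝ (Fin 2) → ℝ) (hE_smooth : ContDiff ℝ 2 E)
    (hE0 : ∀ x ∈ Ω, |E x| ≤ C * Real.exp (-(infDist x (frontier Ω)) / ε₂))
    (hE1 : ∀ x ∈ Ω, ‖gradient E x‖ ≤ C * ε₂⁻¹ * Real.exp (-(infDist x (frontier Ω)) / ε₂))
    (hE2 : ∀ x ∈ Ω, |lap E x| ≤ C * ε₂⁻¹ ^ 2 * Real.exp (-(infDist x (frontier Ω)) / ε₂)) :
    (ε₂ / ε₁) * (∫ x in Ω, (ε₁ * lap E x) ^ 2) + ε₂ * (∫ x in Ω, ‖gradient E x‖ ^ 2)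
      + (∫ x in Ω, E x ^ 2)
      ≤ 2 * C ^ 2 * M := by
  rcases Set.eq_empty_or_nonempty Ω with rfl | ⟨x₀, hx₀⟩
  · simp
    positivity
  have hε0 : ε₂ ≠ 0 := by
    rintro rfl
    norm_num at hε₁₂
    linarith
  have hε : 0 < ε₂ := by
    by_contra hneg
    have hlt : ε₂ < 0 := lt_of_le_of_ne (not_lt.1 hneg) hε0
    have h1 := (norm_nonneg _).trans (hE1 x₀ hx₀)
    have h2 : C * ε₂⁻¹ < 0 := mul_neg_of_pos_of_neg hC (inv_lt_zero.2 hlt)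
    have h3 := mul_neg_of_neg_of_pos h2 (Real.exp_pos (-(infDist x₀ (frontier Ω)) / ε₂))
    linarith
  have hε1 : ε₂ ≤ 1 := by nlinarith
  have hL := exp_layer_lintegral Ω hΩ_open M hM hstrip ε₂ hε
  have hcont : Continuous fun x : EuclideanSpace ℝ (Fin 2) =>
      Real.exp (-(infDist x (frontier Ω)) / ε₂) ^ 2 :=
    ((Real.continuous_exp.comp
      ((continuous_infDist_pt (frontier Ω)).neg.div_const ε₂))).pow 2
  set g : EuclideanSpace ℝ (Fin 2) → ℝ := fun x =>
    Real.exp (-(infDist x (frontier Ω)) / ε₂) ^ 2 with hg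
  have hgi : IntegrableOn g Ω := by
    refine ⟨hcont.aestronglyMeasurable, ?_⟩
    rw [hasFiniteIntegral_iff_ofReal (Filter.Eventually.of_forall fun x => by positivity)]
    exact hL.trans_lt ENNReal.ofReal_lt_top
  have hI : ∫ x in Ω, g x ≤ M * ε₂ / 2 := by
    rw [integral_eq_lintegral_of_nonneg_ae (Filter.Eventually.of_forall fun x => by positivity)
      hcont.aestronglyMeasurable]
    exact ENNReal.toReal_le_of_le_ofReal (by positivity) hL
  have key : ∀ (f : EuclideanSpace ℝ (Fin 2) → ℝ) (K : ℝ), 0 ≤ K →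
      (∀ x, 0 ≤ f x) → (∀ x ∈ Ω, f x ≤ K * g x) → ∫ x in Ω, f x ≤ K * (M * ε₂ / 2) := by
    intro f K hK hf hfg
    calc ∫ x in Ω, f x ≤ ∫ x in Ω, K * g x := by
          refine integral_mono_of_nonneg (Filter.Eventually.of_forall hf) (hgi.const_mul K) ?_
          filter_upwards [ae_restrict_mem hΩ_open.measurableSet] with x hx using hfg x hx
      _ = K * ∫ x in Ω, g x := integral_const_mul _ _
      _ ≤ _ := mul_le_mul_of_nonneg_left hI hK
  have k0 := key (fun x => E x ^ 2) (C ^ 2) (by positivity) (fun x => by positivity) (by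
    intro x hx
    have := pow_le_pow_left₀ (abs_nonneg _) (hE0 x hx) 2
    rwa [sq_abs, mul_pow] at this)
  have k1 := key (fun x => ‖gradient E x‖ ^ 2) ((C * ε₂⁻¹) ^ 2) (by positivity)
    (fun x => by positivity) (by
    intro x hx
    have := pow_le_pow_left₀ (norm_nonneg _) (hE1 x hx) 2
    rwa [mul_pow _ (Real.exp _)] at this)
  have k2 := key (fun x => (ε₁ * lap E x) ^ 2) (ε₁ ^ 2 * (C * ε₂⁻¹ ^ 2) ^ 2) (by positivity)
    (fun x => by positivity) (by
    intro x hx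
    have := pow_le_pow_left₀ (abs_nonneg _) (hE2 x hx) 2
    rw [sq_abs, mul_pow _ (Real.exp _)] at this
    rw [mul_pow, mul_assoc]
    exact mul_le_mul_of_nonneg_left this (by positivity))
  have b2 : (ε₂ / ε₁) * (∫ x in Ω, (ε₁ * lap E x) ^ 2) ≤ C ^ 2 * M / 2 := by
    refine (mul_le_mul_of_nonneg_left k2 (by positivity)).trans ?_
    have : (ε₂ / ε₁) * (ε₁ ^ 2 * (C * ε₂⁻¹ ^ 2) ^ 2 * (M * ε₂ / 2))
        = (ε₁ / ε₂ ^ 2) * (C ^ 2 * M / 2) := by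
      field_simp
    rw [this]
    exact mul_le_of_le_one_left (by positivity) ((div_le_one (by positivity)).2 hε₁₂)
  have b1 : ε₂ * (∫ x in Ω, ‖gradient E x‖ ^ 2) ≤ C ^ 2 * M / 2 := by
    refine (mul_le_mul_of_nonneg_left k1 hε.le).trans (le_of_eq ?_)
    field_simp
  have b0 : (∫ x in Ω, E x ^ 2) ≤ C ^ 2 * M / 2 := by
    refine k0.trans ?_
    have : 0 ≤ C ^ 2 * M := by positivity
    nlinarith
  have : 0 ≤ C ^ 2 * M := by positivity
  linarith
end

section
/- Let Ω ⊂ ℝ² be a bounded open set and M > 0 a constant such that for every t > 0 the Lebesgue measure of {x ∈ Ω : dist(x, ∂Ω) ≤ t} is at most M·t. Let 0 < ε₁ ≤ ε₂² ≤ 1, let C > 0, and let E : Ω → ℝ be twice continuously differentiable with, for all x ∈ Ω and d(x) := dist(x, ∂Ω): |E(x)| ≤ C (ε₁/ε₂²) e^{−ε₂ d(x)/ε₁}, |∇E(x)| ≤ C ε₂⁻¹ e^{−ε₂ d(x)/ε₁}, and |ΔE(x)| ≤ C ε₁⁻¹ e^{−ε₂ d(x)/ε₁}. Then the squared balanced norm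 of (E, ε₁ΔE) is uniformly bounded: (ε₂/ε₁) ‖ε₁ΔE‖²_{L²(Ω)} + ε₂ ‖∇E‖²_{L²(Ω)} + ‖E‖²_{L²(Ω)} ≤ 2 C² M, uniformly in ε₁ and ε₂. -/
open MeasureTheory Real Metric

lemma fast_layer_exp_integral
    (Ω : Set (EuclideanSpace ℝ (Fin 2)))
    (hΩ_open : IsOpen Ω) (hΩ_bdd : Bornology.IsBounded Ω)
    (M : ℝ) (hM : 0 < M)
    (hstrip : ∀ t : ℝ, 0 < t →
      volume {x ∈ Ω | infDist x (frontier Ω) ≤ t} ≤ ENNReal.ofReal (M * t))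
    (a : ℝ) (ha : 0 < a) :
    IntegrableOn (fun x => Real.exp (-(a * infDist x (frontier Ω)))) Ω ∧
    (∫ x in Ω, Real.exp (-(a * infDist x (frontier Ω)))) ≤ M / a := by
  have hcont : Continuous (fun x => Real.exp (-(a * infDist x (frontier Ω)))) := by
    have := continuous_infDist_pt (frontier Ω)
    fun_prop
  have hfin : volume Ω < ⊤ := hΩ_bdd.measure_lt_top
  have hint : IntegrableOn (fun x => Real.exp (-(a * infDist x (frontier Ω)))) Ω := by
    refine Measure.integrableOn_of_bounded (M := 1) hfin.ne hcont.aestronglyMeasurable ?_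
    refine Filter.Eventually.of_forall fun x => ?_
    rw [Real.norm_eq_abs, abs_of_pos (Real.exp_pos _), Real.exp_le_one_iff]
    have : 0 ≤ infDist x (frontier Ω) := infDist_nonneg
    have := mul_nonneg ha.le this
    linarith
  refine ⟨hint, ?_⟩
  have hlogint : IntegrableOn (fun t : ℝ => -(M / a) * Real.log t) (Set.Ioc 0 1) := by
    have h : IntervalIntegrable Real.log volume 0 1 := intervalIntegral.intervalIntegrable_log'
    have h2 := (intervalIntegrable_iff_integrableOn_Ioc_of_le zero_le_one).1 h
    exact h2.const_mul _
  have hlog : (∫ t in Set.Ioc (0:ℝ) 1, -(M / a) * Real.log t) = M / a := by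
    rw [← intervalIntegral.integral_of_le zero_le_one, intervalIntegral.integral_const_mul,
      integral_log]
    simp
  have hpos : 0 ≤ M / a := by positivity
  have key : ENNReal.ofReal (∫ x in Ω, Real.exp (-(a * infDist x (frontier Ω))))
      ≤ ENNReal.ofReal (M / a) := by
    rw [ofReal_integral_eq_lintegral_ofReal hint
      (Filter.Eventually.of_forall fun x => (Real.exp_pos _).le),
      lintegral_eq_lintegral_meas_lt _ (Filter.Eventually.of_forall fun x => (Real.exp_pos _).le)
        hcont.measurable.aemeasurable]
    rw [← hlog, ofReal_integral_eq_lintegral_ofReal hlogint]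
    · rw [← Set.Ioc_union_Ioi_eq_Ioi (zero_le_one : (0:ℝ) ≤ 1)]
      refine (lintegral_union_le _ _ _).trans ?_
      have h0 : (∫⁻ t in Set.Ioi (1:ℝ), (volume.restrict Ω)
          {x | t < Real.exp (-(a * infDist x (frontier Ω)))}) = 0 := by
        rw [setLIntegral_congr_fun measurableSet_Ioi (g := fun _ => 0)]
        · simp
        · intro t ht
          have : {x | t < Real.exp (-(a * infDist x (frontier Ω)))} = ∅ := by
            ext x
            simp only [Set.mem_setOf_eq, Set.mem_empty_iff_false, iff_false, not_lt]
            refine le_trans ?_ (le_of_lt ht)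
            rw [Real.exp_le_one_iff]
            have : 0 ≤ infDist x (frontier Ω) := infDist_nonneg
            have := mul_nonneg ha.le this
            linarith
          simp [this]
      rw [h0, add_zero]
      refine setLIntegral_mono' measurableSet_Ioc fun t ht => ?_
      rw [Measure.restrict_apply (measurableSet_lt measurable_const hcont.measurable)]
      rcases eq_or_lt_of_le ht.2 with h1 | h1
      · have : {x | t < Real.exp (-(a * infDist x (frontier Ω)))} = ∅ := by
          ext x
          simp only [Set.mem_setOf_eq, Set.mem_empty_iff_false, iff_false, not_lt]
          rw [h1, Real.exp_le_one_iff]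
          have : 0 ≤ infDist x (frontier Ω) := infDist_nonneg
          have := mul_nonneg ha.le this
          linarith
        simp [this]
      · have hl : Real.log t < 0 := Real.log_neg ht.1 h1
        have hs := hstrip (-Real.log t / a) (div_pos (by linarith) ha)
        have e : M * (-Real.log t / a) = -(M / a) * Real.log t := by ring
        rw [e] at hs
        refine le_trans (measure_mono ?_) hs
        rintro x ⟨hx, hxΩ⟩
        refine ⟨hxΩ, ?_⟩
        have := (Real.log_lt_iff_lt_exp ht.1).2 hx
        rw [le_div_iff₀ ha]
        linarith
    · refine (ae_restrict_iff' measurableSet_Ioc).2 (Filter.Eventually.of_forall fun t ht => ?_)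
      have := Real.log_nonpos ht.1.le ht.2
      have := mul_nonneg hpos (neg_nonneg.2 this)
      show 0 ≤ _
      linarith
  exact (ENNReal.ofReal_le_ofReal_iff hpos).1 key

lemma fast_layer_sq_integral
    (Ω : Set (EuclideanSpace ℝ (Fin 2))) (hΩ_open : IsOpen Ω)
    (ε₁ ε₂ : ℝ) (K B : ℝ) (f : EuclideanSpace ℝ (Fin 2) → ℝ)
    (hI : IntegrableOn (fun x => Real.exp (-(2 * ε₂ / ε₁ * infDist x (frontier Ω)))) Ω)
    (hB : (∫ x in Ω, Real.exp (-(2 * ε₂ / ε₁ * infDist x (frontier Ω)))) ≤ B)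
    (hf : ∀ x ∈ Ω, |f x| ≤ K * Real.exp (-(ε₂ * infDist x (frontier Ω)) / ε₁)) :
    (∫ x in Ω, f x ^ 2) ≤ K ^ 2 * B := by
  refine le_trans ?_ (mul_le_mul_of_nonneg_left hB (sq_nonneg K))
  rw [← integral_const_mul]
  refine integral_mono_of_nonneg (Filter.Eventually.of_forall fun x => sq_nonneg _)
    (hI.const_mul _) ?_
  refine (ae_restrict_iff' hΩ_open.measurableSet).2 (Filter.Eventually.of_forall fun x hx => ?_)
  have h := pow_le_pow_left₀ (abs_nonneg _) (hf x hx) 2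
  rw [sq_abs, mul_pow, ← Real.exp_nat_mul] at h
  refine h.trans (le_of_eq ?_)
  congr 2
  push_cast
  ring

/-- Balanced norm of the fast boundary layer component `E₁ ~ (ε₁/ε₂²) e^{−ε₂ dist(x,∂Ω)/ε₁}`:
`|||(E, ε₁ΔE)|||_B² ≤ 2 C² M`, uniformly in `ε₁, ε₂`. -/
theorem balanced_norm_fast_layer
    (Ω : Set (EuclideanSpace ℝ (Fin 2)))
    (hΩ_open : IsOpen Ω) (hΩ_bdd : Bornology.IsBounded Ω)
    (M : ℝ) (hM : 0 < M)
    (hstrip : ∀ t : ℝ, 0 < t →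
      volume {x ∈ Ω | infDist x (frontier Ω) ≤ t} ≤ ENNReal.ofReal (M * t))
    (ε₁ ε₂ : ℝ) (hε₁ : 0 < ε₁) (hε₁₂ : ε₁ ≤ ε₂ ^ 2) (hε₂1 : ε₂ ^ 2 ≤ 1)
    (C : ℝ) (hC : 0 < C)
    (E : EuclideanSpace ℝ (Fin 2) → ℝ) (hE_smooth : ContDiff ℝ 2 E)
    (hE0 : ∀ x ∈ Ω, |E x| ≤
      C * (ε₁ / ε₂ ^ 2) * Real.exp (-(ε₂ * infDist x (frontier Ω)) / ε₁))
    (hE1 : ∀ x ∈ Ω, ‖gradient E x‖ ≤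
      C * ε₂⁻¹ * Real.exp (-(ε₂ * infDist x (frontier Ω)) / ε₁))
    (hE2 : ∀ x ∈ Ω, |lap E x| ≤
      C * ε₁⁻¹ * Real.exp (-(ε₂ * infDist x (frontier Ω)) / ε₁)) :
    (ε₂ / ε₁) * (∫ x in Ω, (ε₁ * lap E x) ^ 2) + ε₂ * (∫ x in Ω, ‖gradient E x‖ ^ 2)
      + (∫ x in Ω, E x ^ 2)
      ≤ 2 * C ^ 2 * M := by
  rcases Set.eq_empty_or_nonempty Ω with rfl | ⟨x₀, hx₀⟩
  · simp
    positivity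
  have hne : ε₂ ≠ 0 := by
    rintro rfl
    norm_num at hε₁₂
    linarith
  have hε₂ : 0 < ε₂ := by
    have h := (norm_nonneg _).trans (hE1 x₀ hx₀)
    have h2 := nonneg_of_mul_nonneg_left h (Real.exp_pos _)
    have h3 := nonneg_of_mul_nonneg_right h2 hC
    exact lt_of_le_of_ne (inv_nonneg.1 h3) hne.symm
  have hε₂' : ε₂ ≤ 1 := by nlinarith
  obtain ⟨hI, hB⟩ := fast_layer_exp_integral Ω hΩ_open hΩ_bdd M hM hstrip (2 * ε₂ / ε₁)
    (by positivity)
  have A2 := fast_layer_sq_integral Ω hΩ_open ε₁ ε₂ C _ (fun x => ε₁ * lap E x) hI hB (by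
    intro x hx
    rw [abs_mul, abs_of_pos hε₁]
    refine (mul_le_mul_of_nonneg_left (hE2 x hx) hε₁.le).trans (le_of_eq ?_)
    field_simp)
  have A1 := fast_layer_sq_integral Ω hΩ_open ε₁ ε₂ _ _ (fun x => ‖gradient E x‖) hI hB (by
    intro x hx
    rw [abs_of_nonneg (norm_nonneg _)]
    exact hE1 x hx)
  have A0 := fast_layer_sq_integral Ω hΩ_open ε₁ ε₂ _ _ E hI hB hE0
  have B2 := mul_le_mul_of_nonneg_left A2 (div_pos hε₂ hε₁).le
  have B1 := mul_le_mul_of_nonneg_left A1 hε₂.le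
  have hr : ε₁ / ε₂ ^ 2 ≤ 1 := (div_le_one (by positivity)).2 hε₁₂
  have hr0 : 0 < ε₁ / ε₂ ^ 2 := by positivity
  have hCM : 0 < C ^ 2 * M := by positivity
  have e2 : ε₂ / ε₁ * (C ^ 2 * (M / (2 * ε₂ / ε₁))) = C ^ 2 * M / 2 := by
    field_simp
  have e1 : ε₂ * ((C * ε₂⁻¹) ^ 2 * (M / (2 * ε₂ / ε₁))) = C ^ 2 * M / 2 * (ε₁ / ε₂ ^ 2) := by
    field_simp
  have e0 : (C * (ε₁ / ε₂ ^ 2)) ^ 2 * (M / (2 * ε₂ / ε₁))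
      = C ^ 2 * M / 2 * ((ε₁ / ε₂ ^ 2) ^ 3 * ε₂) := by
    field_simp
  have h3 : (ε₁ / ε₂ ^ 2) ^ 3 * ε₂ ≤ 1 :=
    mul_le_one₀ (pow_le_one₀ hr0.le hr) hε₂.le hε₂'
  have f1 := mul_le_mul_of_nonneg_left hr (half_pos hCM).le
  have f0 := mul_le_mul_of_nonneg_left h3 (half_pos hCM).le
  rw [e2] at B2
  rw [e1] at B1
  rw [e0] at A0
  linarith
end
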